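/- Let α ≤ β ≤ −1 be negative integers, let N be a real number that is not a nonpositive integer, let M = (M_i)_{i≥0} be real parameters with M_i ∉ {0,1}, and let F be a finite set of positive integers with {−β, …, −α−β−1} ⊆ F. Write λ^{α,β}(v) = v(v+α+β+1). Then for every n ∈ σ_F, the exceptional Hahn polynomial h_n^{α,β,N;M,F} satisfies the second order difference equation h_{−1}(x)·h_n^{α,β,N;M,F}(x−1) + h_0(x)·h_n^{α,β,N;M,F}(x) + h_1(x)·h_n^{α,β,N;M,F}(x+1) = λ^{α,β}(n−u_F)·h_n^{α,β,N;M,F}(x) for every x at which Ω_{M,F}^{α,β,N}(x)·Ω_{M,F}^{α,β,N}(x+1) ≠ 0, where h_{−1}(x) = x(x−β−N−1)·Ω_{M,F}^{α,β,N}(x+1)/Ω_{M,F}^{α,β,N}(x), h_1(x) = (x+α+n_F+1)(x−N+n_F)·Ω_{M,F}^{α,β,N}(x)/Ω_{M,F}^{α,β,N}(x+1), and h_0(x) = −(x+n_F)(x−β−N−1+n_F) − (x+α+1+n_F)(x−N+n_F) + [(x+1+α+n_F)(x−N+n_F)·Λ_{M,F}^{α,β,N}(x+1)/Ω_{M,F}^{α,β,N}(x+1)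 − (x+α+n_F)(x−N−1+n_F)·Λ_{M,F}^{α,β,N}(x)/Ω_{M,F}^{α,β,N}(x)]. -/

import Mathlib

open Finset MeasureTheory

noncomputable section ExceptionalHahnJacobi

/-- Pochhammer symbol `(z)_m = z (z+1) ⋯ (z+m-1)`. -/
def poch (z : ℝ) (m : ℕ) : ℝ := ∏ i ∈ Finset.range m, (z + (i : ℝ))

/-- Pochhammer symbol with integer exponent; `(z)_{-k} = 1 / ((z-1)(z-2)⋯(z-k))`. -/
def pochZ (z : ℝ) (m : ℤ) : ℝ :=
  if 0 ≤ m then poch z m.toNat else 1 / poch (z - ((-m).toNat : ℝ)) (-m).toNat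

/-- Generalized binomial coefficient `C(z, k) = z(z-1)⋯(z-k+1)/k!`. -/
def genBinom (z : ℝ) (k : ℕ) : ℝ := (∏ i ∈ Finset.range k, (z - (i : ℝ))) / (k.factorial : ℝ)

/-- `λ^{a,b}(x) = x (x + a + b + 1)`. -/
def lam (a b x : ℝ) : ℝ := x * (x + a + b + 1)

/-- Hahn polynomial `h_n^{a,b,N}(x)`. -/
def hahn (a b N : ℝ) (n : ℕ) (x : ℝ) : ℝ :=
  ∑ j ∈ Finset.range (n + 1),
    poch (-(n : ℝ)) j * poch (a + b + (n : ℝ) + 1) j * poch (-N + (j : ℝ)) (n - j) *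
      poch (a + (j : ℝ) + 1) (n - j) * poch (-x) j / (j.factorial : ℝ)

/-- Dual Hahn polynomial `R_n^{a,b,N}(x)`. -/
def dualHahn (a b N : ℝ) (n : ℕ) (x : ℝ) : ℝ :=
  ∑ j ∈ Finset.range (n + 1),
    poch (-(n : ℝ)) j * poch (-N + (j : ℝ)) (n - j) * poch (a + (j : ℝ) + 1) (n - j) /
        ((n.factorial : ℝ) * (-1 : ℝ) ^ j * (j.factorial : ℝ)) *
      ∏ i ∈ Finset.range j, (x - (i : ℝ) * (a + b + 1 + (i : ℝ)))

/-- Dual Hahn polynomial with integer degree; zero for negative degree. -/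
def dualHahnZ (a b N : ℝ) (m : ℤ) (x : ℝ) : ℝ :=
  if 0 ≤ m then dualHahn a b N m.toNat x else 0

/-- Jacobi polynomial `P_n^{a,b}(x)`. -/
def jacobiP (a b : ℝ) (n : ℕ) (x : ℝ) : ℝ :=
  (2 : ℝ)⁻¹ ^ n * ∑ j ∈ Finset.range (n + 1),
    genBinom ((n : ℝ) + a) j * genBinom ((n : ℝ) + b) (n - j) * (x - 1) ^ (n - j) * (x + 1) ^ j

/-- The function `φ_u^{α,β,N}(s,x)`, a normalized terminating ₃F₂. -/
def phiH (α β : ℤ) (N : ℝ) (u : ℕ) (s x : ℝ) : ℝ :=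
  poch ((α : ℝ) + 1) (max u (-α - β - (u : ℤ) - 1).toNat) *
    poch (-N) (max u (-α - β - (u : ℤ) - 1).toNat) *
    ∑ j ∈ Finset.range (u + 1),
      poch (-(u : ℝ)) j * poch ((u : ℝ) - s + (α : ℝ) + (β : ℝ) + 1) j * poch (-x) j /
        (poch ((α : ℝ) - s + 1) j * poch (-N) j * (j.factorial : ℝ))

/-- The polynomials `Ĥ_n^{α,β,N;M}(x)`. -/
def Hhat (α β : ℤ) (N : ℝ) (M : ℕ → ℝ) (n : ℕ) (x : ℝ) : ℝ :=
  if ⌈((-α - β : ℤ) : ℚ) / 2⌉ ≤ (n : ℤ) ∧ (n : ℤ) ≤ -α - 1 then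
    deriv (fun s => phiH α β N n s x) 0 -
      deriv (fun s => phiH α β N (-α - β - (n : ℤ) - 1).toNat s x) 0
  else if -α ≤ (n : ℤ) ∧ (n : ℤ) ≤ -α - β - 1 then
    (-1 : ℝ) ^ ((β : ℤ) + (n : ℤ)) * ((β + (n : ℤ)).toNat.factorial : ℝ) *
      (((-α - β - (n : ℤ) - 1).toNat.factorial : ℝ) * poch (-x) (-α).toNat *
          hahn (-(α : ℝ)) (β : ℝ) ((α : ℝ) + N) ((α + (n : ℤ)).toNat) (x + (α : ℝ)) +
        (((α + (n : ℤ)).toNat.factorial : ℝ)) *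
            poch (-N - (α : ℝ) - (β : ℝ) - (n : ℝ) - 1) (2 * (n : ℤ) + α + β + 1).toNat /
            (M ((α + (n : ℤ)).toNat) - 1) *
          hahn (α : ℝ) (β : ℝ) N ((-α - β - (n : ℤ) - 1).toNat) x)
  else hahn (α : ℝ) (β : ℝ) N n x

/-- The function `φ_u^{α,β}(s,x)`, a normalized terminating ₂F₁. -/
def phiJ (α β : ℤ) (u : ℕ) (s x : ℝ) : ℝ :=
  poch ((α : ℝ) + 1) (max u (-α - β - (u : ℤ) - 1).toNat) /
      ((max u.factorial (-α - β - (u : ℤ) - 1).toNat.factorial : ℕ) : ℝ) *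
    ∑ j ∈ Finset.range (u + 1),
      poch (-(u : ℝ)) j * poch ((u : ℝ) - s + (α : ℝ) + (β : ℝ) + 1) j /
          (poch ((α : ℝ) - s + 1) j * (j.factorial : ℝ)) * ((1 - x) / 2) ^ j

/-- The polynomials `P̂_n^{α,β;M}(x)`. -/
def Phat (α β : ℤ) (M : ℕ → ℝ) (n : ℕ) (x : ℝ) : ℝ :=
  if ⌈((-α - β : ℤ) : ℚ) / 2⌉ ≤ (n : ℤ) ∧ (n : ℤ) ≤ -α - 1 then
    deriv (fun s => phiJ α β n s x) 0 -
      deriv (fun s => phiJ α β (-α - β - (n : ℤ) - 1).toNat s x) 0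
  else if -α ≤ (n : ℤ) ∧ (n : ℤ) ≤ -α - β - 1 then
    (-1 : ℝ) ^ ((β : ℤ) + (n : ℤ)) *
      ((((n : ℤ) + α).toNat.factorial : ℝ) * (((n : ℤ) + β).toNat.factorial : ℝ) *
        ((-α - β - (n : ℤ) - 1).toNat.factorial : ℝ)) / (n.factorial : ℝ) *
      ((M ((α + (n : ℤ)).toNat) - 1)⁻¹ * jacobiP (α : ℝ) (β : ℝ) ((-α - β - (n : ℤ) - 1).toNat) x +
        ((1 - x) / 2) ^ (-α).toNat * jacobiP (-(α : ℝ)) (β : ℝ) ((α + (n : ℤ)).toNat) x)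
  else jacobiP (α : ℝ) (β : ℝ) n x

/-- `u_F = Σ_{f ∈ F} f - C(n_F + 1, 2)`. -/
def uF (F : Finset ℕ) : ℕ := (∑ f ∈ F, f) - (F.card + 1).choose 2

/-- `n ∈ σ_F = {u_F, u_F + 1, …} \ {u_F + f : f ∈ F}`. -/
def inSigma (F : Finset ℕ) (n : ℕ) : Prop := uF F ≤ n ∧ n - uF F ∉ F

/-- The `i`-th element of `F` in increasing order. -/
def elemOf (F : Finset ℕ) (i : Fin F.card) : ℕ := ((F.orderIsoOfFin rfl i : {x // x ∈ F}) : ℕ)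

/-- The `i`-th element of a finite set of integers, in increasing order. -/
def elemOfZ (S : Finset ℤ) (i : Fin S.card) : ℤ := ((S.orderIsoOfFin rfl i : {x // x ∈ S}) : ℤ)

/-- Exceptional Hahn polynomial `h_n^{α,β,N;M,F}(x)`. -/
def exHahn (α β : ℤ) (N : ℝ) (M : ℕ → ℝ) (F : Finset ℕ) (n : ℕ) (x : ℝ) : ℝ :=
  Matrix.det (Matrix.of fun i j : Fin (F.card + 1) =>
    Fin.cases (Hhat α β N M (n - uF F) (x + ((j : ℕ) : ℝ)))
      (fun k => Hhat α β N M (elemOf F k) (x + ((j : ℕ) : ℝ))) i)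

/-- The polynomial `Ω_{M,F}^{α,β,N}(x)`. -/
def OmegaH (α β : ℤ) (N : ℝ) (M : ℕ → ℝ) (F : Finset ℕ) (x : ℝ) : ℝ :=
  Matrix.det (Matrix.of fun i j : Fin F.card =>
    Hhat α β N M (elemOf F i) (x + ((j : ℕ) : ℝ)))

/-- The polynomial `Λ_{M,F}^{α,β,N}(x)` (columns `j ∈ {1,…,n_F+1}`, `j ≠ n_F`). -/
def LambdaH (α β : ℤ) (N : ℝ) (M : ℕ → ℝ) (F : Finset ℕ) (x : ℝ) : ℝ :=
  Matrix.det (Matrix.of fun i j : Fin F.card =>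
    Hhat α β N M (elemOf F i)
      (x + ((if (j : ℕ) = F.card - 1 then F.card else (j : ℕ) : ℕ) : ℝ)))

/-- Exceptional Jacobi polynomial `P_n^{α,β;M,F}(x)`. -/
def exJacobi (α β : ℤ) (M : ℕ → ℝ) (F : Finset ℕ) (n : ℕ) (x : ℝ) : ℝ :=
  Matrix.det (Matrix.of fun i j : Fin (F.card + 1) =>
    Fin.cases (iteratedDeriv (j : ℕ) (Phat α β M (n - uF F)) x)
      (fun k => iteratedDeriv (j : ℕ) (Phat α β M (elemOf F k)) x) i)

/-- The polynomial `Ω_{M,F}^{α,β}(x)`. -/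
def OmegaJ (α β : ℤ) (M : ℕ → ℝ) (F : Finset ℕ) (x : ℝ) : ℝ :=
  Matrix.det (Matrix.of fun i j : Fin F.card =>
    iteratedDeriv (j : ℕ) (Phat α β M (elemOf F i)) x)

/-- `F_ext = F \ {-β, …, -α-β-1}`. -/
def Fext (α β : ℤ) (F : Finset ℕ) : Finset ℕ :=
  F.filter fun f : ℕ => ((f : ℤ) < -β ∨ -α - β ≤ (f : ℤ))

/-- Admissibility of the data `α, β, M, F`. -/
def IsAdmissible (α β : ℤ) (M : ℕ → ℝ) (F : Finset ℕ) : Prop :=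
  (∀ i : ℕ, (i : ℤ) ≤ -β - 1 → (∀ f ∈ F, (i : ℤ) ≠ -β - (f : ℤ) - 1) →
      Real.sign (M i) =
        Real.sign (∏ f ∈ Fext α β F, (((i : ℝ) - (f : ℝ) - (α : ℝ)) * ((i : ℝ) + (f : ℝ) + (β : ℝ) + 1)))) ∧
  (∀ x : ℤ, 0 ≤ x → (∃ f ∈ F, x ≤ (f : ℤ) + α + β) →
      0 ≤ ∏ f ∈ F.filter (fun f : ℕ => -α - β ≤ (f : ℤ)), (x - (f : ℤ) - α - β))

/-- `U_{F-} = {f + α + β : f ∈ F, 1 ≤ f ≤ -β-1}`. -/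
def UFm (α β : ℤ) (F : Finset ℕ) : Finset ℤ :=
  (F.filter fun f : ℕ => (1 ≤ f ∧ (f : ℤ) ≤ -β - 1)).image fun f : ℕ => (f : ℤ) + α + β

/-- `U_{F+} = {f + α + β : f ∈ F, f ≥ -α-β}`. -/
def UFp (α β : ℤ) (F : Finset ℕ) : Finset ℤ :=
  (F.filter fun f : ℕ => -α - β ≤ (f : ℤ)).image fun f : ℕ => (f : ℤ) + α + β

/-- `U_F = U_{F-} ∪ U_{F+}`. -/
def UF (α β : ℤ) (F : Finset ℕ) : Finset ℤ := UFm α β F ∪ UFp α β F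

/-- The weight of the measure `ω_{α,β,N}^{M,F}` at the point `x`. -/
def wH (α β : ℤ) (N : ℕ) (M : ℕ → ℝ) (F : Finset ℕ) (x : ℕ) : ℝ :=
  genBinom ((α : ℝ) + (F.card : ℝ) + (x : ℝ)) x *
      genBinom ((β : ℝ) + (N : ℝ) - (x : ℝ)) (N - F.card - x) /
    (OmegaH α β (N : ℝ) M F (x : ℝ) * OmegaH α β (N : ℝ) M F ((x : ℝ) + 1))

/-- The weight `ω_{α,β;M,F}(x)` on `[-1,1]`. -/
def wJ (α β : ℤ) (M : ℕ → ℝ) (F : Finset ℕ) (x : ℝ) : ℝ :=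
  (1 - x) ^ (α + (F.card : ℤ)) * (1 + x) ^ (β + (F.card : ℤ)) / (OmegaJ α β M F x) ^ 2

/-- The measure on `[-1,1]` with density `ω_{α,β;M,F}`. -/
def jacobiMeasure (α β : ℤ) (M : ℕ → ℝ) (F : Finset ℕ) : Measure ℝ :=
  (volume.restrict (Set.Icc (-1 : ℝ) 1)).withDensity fun x => ENNReal.ofReal (wJ α β M F x)

/-- Mass of the dual Hahn measure `ρ_{b,a,N̂}` at `λ^{a,b}(x)`. -/
def rhoMass (a b Nh : ℤ) (x : ℕ) : ℝ :=
  (2 * (x : ℝ) + (a : ℝ) + (b : ℝ) + 1) * poch ((b : ℝ) + 1) x * poch (-(Nh : ℝ)) x *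
      (Nh.toNat.factorial : ℝ) /
    ((-1 : ℝ) ^ x * poch ((x : ℝ) + (a : ℝ) + (b : ℝ) + 1) (Nh + 1).toNat *
      poch ((a : ℝ) + 1) x * (x.factorial : ℝ))

/-- Mass of the measure `ν_{a,b,N̂}^{M}` at `λ^{a,b}(s)`. -/
def nuMass (a b Nh : ℤ) (M : ℕ → ℝ) (s : ℤ) : ℝ :=
  if -b ≤ s ∧ s ≤ -1 then
    (2 * (s : ℝ) + (a : ℝ) + (b : ℝ) + 1) * poch ((Nh : ℝ) + 1 - (s : ℝ)) (s + b).toNat /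
        poch ((Nh : ℝ) + (b : ℝ) + 1) (s + a + 1).toNat * M ((s + b).toNat)
  else if 0 ≤ s ∧ s ≤ Nh then
    poch ((Nh : ℝ) + 1) b.toNat ^ 2 / poch ((b : ℝ) + 1) (a - b).toNat * rhoMass a b Nh s.toNat /
      ∏ i ∈ Finset.range b.toNat, (((s : ℝ) + (a : ℝ) + (i : ℝ) + 1) * ((s : ℝ) + (b : ℝ) - (i : ℝ)))
  else 0

/-- `ζ_v` (defined for any integer `v` via `pochZ`). -/
def zetaH (α β : ℤ) (N : ℝ) (v : ℤ) : ℝ :=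
  pochZ (-N - (α : ℝ) - (β : ℝ)) v * poch ((v : ℝ) + 1) (-α).toNat *
    ((v - α - β).toNat.factorial : ℝ)

/-- `θ_v^M`. -/
def thetaM (β : ℤ) (M : ℕ → ℝ) (v : ℕ) : ℝ :=
  if (v : ℤ) ≤ -β - 1 then 1 - M ((-β - 1 - (v : ℤ)).toNat) else 1

/-- `τ_v = ∏_{u ∈ U_F} (λ^{a,b}(v+α+β) - λ^{a,b}(u))` with `a = -α`, `b = -β`. -/
def tauH (α β : ℤ) (F : Finset ℕ) (v : ℕ) : ℝ :=
  ∏ u ∈ UF α β F,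
    (lam ((-α : ℤ) : ℝ) ((-β : ℤ) : ℝ) ((v : ℝ) + (α : ℝ) + (β : ℝ)) -
      lam ((-α : ℤ) : ℝ) ((-β : ℤ) : ℝ) ((u : ℤ) : ℝ))

/-- `ξ_n`. -/
def xiH (α β : ℤ) (N : ℝ) (F : Finset ℕ) (n : ℕ) : ℝ :=
  pochZ (N - (n : ℝ) + 1) ((n : ℤ) + α + β) ^ (α + (F.card : ℤ) + 1) *
    ∏ j ∈ Finset.range (F.card + 1), poch (N - (n : ℝ) - (j : ℝ) + 1) j

/-- `κ_M`. -/
def kappaM (α β : ℤ) (N : ℝ) (M : ℕ → ℝ) (F : Finset ℕ) : ℝ :=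
  (∏ u ∈ UFm α β F, (1 - M ((-u + α - 1).toNat))) * ∏ u ∈ UF α β F, zetaH α β N u

/-- Entry `(i,j)` (0-based) of the determinant defining `q_n^{a,b,N̂;M,U_F}`. -/
def qEntry (α β : ℤ) (N : ℝ) (M : ℕ → ℝ) (F : Finset ℕ) (n : ℕ) (x : ℝ) (i j : ℕ) : ℝ :=
  if i = 0 then
    (-1 : ℝ) ^ j * dualHahnZ (((-α).toNat : ℝ)) (((-β).toNat : ℝ)) (N + (α : ℝ) + (β : ℝ))
      ((n : ℤ) - (-α).toNat + j) x
  else if h1 : i - 1 < (UFm α β F).card then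
    (-1 : ℝ) ^ j * dualHahnZ (((-α).toNat : ℝ)) (((-β).toNat : ℝ)) (N + (α : ℝ) + (β : ℝ))
      ((n : ℤ) - (-α).toNat + j)
      (lam (((-α).toNat : ℝ)) (((-β).toNat : ℝ)) ((elemOfZ (UFm α β F) ⟨i - 1, h1⟩ : ℤ) : ℝ))
  else if i - 1 - (UFm α β F).card < (-α).toNat then
    poch (((-α).toNat : ℝ) + ((-β).toNat : ℝ) + (N + (α : ℝ) + (β : ℝ)) - (n : ℝ) - (j : ℝ) + 1) j *
      Hhat α β (-2 - (N + (α : ℝ) + (β : ℝ))) M ((-β).toNat + (i - 1 - (UFm α β F).card))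
        (-(n : ℝ) + ((-α).toNat : ℝ) - (j : ℝ) - 1)
  else if h3 : i - 1 - (UFm α β F).card - (-α).toNat < (UFp α β F).card then
    (-1 : ℝ) ^ j * dualHahnZ (((-α).toNat : ℝ)) (((-β).toNat : ℝ)) (N + (α : ℝ) + (β : ℝ))
      ((n : ℤ) - (-α).toNat + j)
      (lam (((-α).toNat : ℝ)) (((-β).toNat : ℝ))
        ((elemOfZ (UFp α β F) ⟨i - 1 - (UFm α β F).card - (-α).toNat, h3⟩ : ℤ) : ℝ))
  else 0

/-- The Krall dual Hahn orthogonal polynomial `q_n^{a,b,N̂;M,U_F}(x)`. -/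
def qKrall (α β : ℤ) (N : ℝ) (M : ℕ → ℝ) (F : Finset ℕ) (n : ℕ) (x : ℝ) : ℝ :=
  Matrix.det (Matrix.of fun i j : Fin (1 + (UFm α β F).card + (-α).toNat + (UFp α β F).card) =>
      qEntry α β N M F n x (i : ℕ) (j : ℕ)) /
    ((-1 : ℝ) ^ ((n + (-α).toNat + (-β).toNat) * ((UF α β F).card + 1) +
        ((-α).toNat + (-β).toNat).choose 2 + ((-β).toNat).choose 2 + (-α).toNat) *
      ∏ u ∈ UF α β F, (x - lam (((-α).toNat : ℝ)) (((-β).toNat : ℝ)) ((u : ℤ) : ℝ)))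

/-- Row used in the renormalized determinant `P̄`: for `-α ≤ g ≤ -α-β-1` it is
`(M_{α+g} - 1) · P̂_g` written without the division by `M_{α+g} - 1`. -/
def PhatBarRow (α β : ℤ) (M : ℕ → ℝ) (g : ℕ) (x : ℝ) : ℝ :=
  if -α ≤ (g : ℤ) ∧ (g : ℤ) ≤ -α - β - 1 then
    (-1 : ℝ) ^ ((β : ℤ) + (g : ℤ)) *
      ((((g : ℤ) + α).toNat.factorial : ℝ) * (((g : ℤ) + β).toNat.factorial : ℝ) *
        ((-α - β - (g : ℤ) - 1).toNat.factorial : ℝ)) / (g.factorial : ℝ) *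
      (jacobiP (α : ℝ) (β : ℝ) ((-α - β - (g : ℤ) - 1).toNat) x +
        (M ((α + (g : ℤ)).toNat) - 1) * ((1 - x) / 2) ^ (-α).toNat *
          jacobiP (-(α : ℝ)) (β : ℝ) ((α + (g : ℤ)).toNat) x)
  else Phat α β M g x

/-- The renormalized exceptional Jacobi polynomial
`P̄_n^{α,β;M,F} = (∏_{i=0}^{-β-1} (M_i - 1)) · P_n^{α,β;M,F}`
(written so that the factors `M_i - 1` are distributed into the corresponding rows of the
determinant; this agrees with the product formula whenever all `M_i ≠ 1`). -/
def Pbar (α β : ℤ) (M : ℕ → ℝ) (F : Finset ℕ) (n : ℕ) (x : ℝ) : ℝ :=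
  (∏ i ∈ (Finset.range (-β).toNat).filter
      (fun i : ℕ => (((i : ℤ) - α).toNat ∉ F ∧ ((i : ℤ) - α).toNat ≠ n - uF F)), (M i - 1)) *
    Matrix.det (Matrix.of fun r j : Fin (F.card + 1) =>
      Fin.cases (iteratedDeriv (j : ℕ) (PhatBarRow α β M (n - uF F)) x)
        (fun k => iteratedDeriv (j : ℕ) (PhatBarRow α β M (elemOf F k)) x) r)

end ExceptionalHahnJacobi


lemma aux_sums (m : ℕ) (hm h0 h1 : ℝ) (p q r A B C : ℕ → ℝ)
    (e1 : hm * p 0 = q 0 * A 0)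
    (e2 : h1 * r (m+1) = q (m+1) * C (m+1))
    (e3 : h0 * q (m+1) + h1 * r m = q (m+1) * B (m+1) + q m * C m) :
    ∃ e : ℕ → ℝ, ∀ G : ℕ → ℝ,
      hm * ∑ j ∈ range (m+2), p j * G j + h0 * ∑ j ∈ range (m+2), q j * G (j+1)
        + h1 * ∑ j ∈ range (m+2), r j * G (j+2)
        - ∑ j ∈ range (m+2), q j * (A j * G j + B j * G (j+1) + C j * G (j+2))
      = ∑ j ∈ range (m+1), e j * G (j+1) := by
  refine ⟨fun j => hm * p (j+1) + h0 * q j + (if j = 0 then 0 else h1 * r (j-1))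
    - (q (j+1) * A (j+1) + q j * B j + (if j = 0 then 0 else q (j-1) * C (j-1))), fun G => ?_⟩
  have s1 : ∑ j ∈ range (m+2), p j * G j
      = ∑ j ∈ range (m+1), p (j+1) * G (j+1) + p 0 * G 0 := by
    rw [Finset.sum_range_succ']
  have s2 : ∑ j ∈ range (m+2), q j * G (j+1)
      = ∑ j ∈ range (m+1), q j * G (j+1) + q (m+1) * G (m+2) := by
    rw [Finset.sum_range_succ]
  have sh : ∀ w : ℕ → ℝ, ∑ j ∈ range (m+2), w j * G (j+2)
      = ∑ j ∈ range (m+1), (if j = 0 then 0 else w (j-1)) * G (j+1)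
        + w m * G (m+2) + w (m+1) * G (m+3) := by
    intro w
    rw [Finset.sum_range_succ, Finset.sum_range_succ, Finset.sum_range_succ' _ m]
    simp
  have s4 : ∑ j ∈ range (m+2), q j * (A j * G j + B j * G (j+1) + C j * G (j+2))
      = (∑ j ∈ range (m+1), (q (j+1) * A (j+1)) * G (j+1) + q 0 * A 0 * G 0)
       + (∑ j ∈ range (m+1), (q j * B j) * G (j+1) + q (m+1) * B (m+1) * G (m+2))
       + ∑ j ∈ range (m+2), (q j * C j) * G (j+2) := by
    rw [← Finset.sum_range_succ' (fun j => q j * A j * G j),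
      ← Finset.sum_range_succ (fun j => q j * B j * G (j+1)),
      ← Finset.sum_add_distrib, ← Finset.sum_add_distrib]
    exact Finset.sum_congr rfl fun j _ => by ring
  rw [s4, s1, s2, sh r, sh (fun j => q j * C j)]
  have key : ∑ j ∈ range (m+1), (hm * p (j+1) + h0 * q j + (if j = 0 then 0 else h1 * r (j-1))
    - (q (j+1) * A (j+1) + q j * B j + (if j = 0 then 0 else q (j-1) * C (j-1)))) * G (j+1)
    = hm * ∑ j ∈ range (m+1), p (j+1) * G (j+1) + h0 * ∑ j ∈ range (m+1), q j * G (j+1)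
     + h1 * ∑ j ∈ range (m+1), (if j = 0 then 0 else r (j-1)) * G (j+1)
     - ∑ j ∈ range (m+1), (q (j+1) * A (j+1)) * G (j+1)
     - ∑ j ∈ range (m+1), (q j * B j) * G (j+1)
     - ∑ j ∈ range (m+1), (if j = 0 then 0 else q (j-1) * C (j-1)) * G (j+1) := by
    simp only [Finset.mul_sum, ← Finset.sum_add_distrib, ← Finset.sum_sub_distrib]
    refine Finset.sum_congr rfl fun j _ => ?_
    split_ifs <;> ring
  rw [key]
  linear_combination G 0 * e1 + G (m+3) * e2 + G (m+2) * e3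

noncomputable def casD {k : ℕ} (f : Fin k → ℝ → ℝ) (g : ℝ → ℝ) (x : ℝ) : ℝ :=
  Matrix.det (Matrix.of fun i j : Fin (k + 1) =>
    Fin.cases (g (x + ((j : ℕ) : ℝ))) (fun l => f l (x + ((j : ℕ) : ℝ))) i)

noncomputable def casC {k : ℕ} (f : Fin k → ℝ → ℝ) (x : ℝ) (j : ℕ) : ℝ :=
  if h : j < k + 1 then
    (-1) ^ j * Matrix.det (Matrix.of fun i l : Fin k =>
      f i (x + ((((⟨j, h⟩ : Fin (k+1)).succAbove l : Fin (k+1)) : ℕ) : ℝ)))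
  else 0

lemma casD_eq {k : ℕ} (f : Fin k → ℝ → ℝ) (g : ℝ → ℝ) (x : ℝ) :
    casD f g x = ∑ j ∈ range (k+1), casC f x j * g (x + (j : ℝ)) := by
  rw [← Fin.sum_univ_eq_sum_range (fun j => casC f x j * g (x + (j : ℝ)))]
  unfold casD
  rw [Matrix.det_succ_row_zero]
  refine Finset.sum_congr rfl fun j _ => ?_
  have : casC f x (j : ℕ) = (-1) ^ (j : ℕ) * Matrix.det (Matrix.of fun i l : Fin k =>
      f i (x + (((j.succAbove l : Fin (k+1)) : ℕ) : ℝ))) := by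
    unfold casC
    rw [dif_pos j.isLt]
  rw [this]
  have h2 : (Matrix.of fun i j : Fin (k + 1) =>
    (Fin.cases (g (x + ((j : ℕ) : ℝ))) (fun l => f l (x + ((j : ℕ) : ℝ))) i : ℝ)).submatrix
      Fin.succ j.succAbove = Matrix.of fun i l : Fin k =>
      f i (x + (((j.succAbove l : Fin (k+1)) : ℕ) : ℝ)) := by
    ext i l; simp
  rw [h2]
  simp
  ring

lemma casD_self {k : ℕ} (f : Fin k → ℝ → ℝ) (i : Fin k) (x : ℝ) : casD f (f i) x = 0 := by
  unfold casD
  refine Matrix.det_zero_of_row_eq (i := 0) (j := i.succ) (Fin.succ_ne_zero i).symm ?_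
  ext j; simp

noncomputable def omD {k : ℕ} (f : Fin k → ℝ → ℝ) (x : ℝ) : ℝ :=
  Matrix.det (Matrix.of fun i j : Fin k => f i (x + ((j : ℕ) : ℝ)))

noncomputable def laD {k : ℕ} (f : Fin k → ℝ → ℝ) (x : ℝ) : ℝ :=
  Matrix.det (Matrix.of fun i j : Fin k =>
    f i (x + ((if (j : ℕ) = k - 1 then k else (j : ℕ) : ℕ) : ℝ)))

lemma casC_zero {k : ℕ} (f : Fin k → ℝ → ℝ) (x : ℝ) : casC f x 0 = omD f (x+1) := by
  unfold casC omD
  rw [dif_pos (Nat.succ_pos k)]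
  simp only [pow_zero, one_mul]
  congr 1
  ext i l
  have : ((⟨0, Nat.succ_pos k⟩ : Fin (k+1)).succAbove l) = l.succ := by
    exact Fin.zero_succAbove l
  simp only [Matrix.of_apply, this]
  congr 1
  simp; ring

lemma casC_last {k : ℕ} (f : Fin k → ℝ → ℝ) (x : ℝ) : casC f x k = (-1)^k * omD f x := by
  unfold casC omD
  rw [dif_pos (Nat.lt_succ_self k)]
  congr 2
  ext i l
  have : ((⟨k, Nat.lt_succ_self k⟩ : Fin (k+1)).succAbove l) = l.castSucc :=
    Fin.succAbove_last_apply l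
  simp only [Matrix.of_apply, this]
  simp

lemma casC_pred {m : ℕ} (f : Fin (m+1) → ℝ → ℝ) (x : ℝ) :
    casC f x m = (-1)^m * laD f x := by
  unfold casC laD
  rw [dif_pos (by omega)]
  congr 2
  ext i l
  simp only [Matrix.of_apply]
  congr 3
  simp only [Fin.succAbove, Fin.lt_def]
  have := l.isLt
  by_cases h : (l : ℕ) = m
  · simp [h]
  · have : (l : ℕ) < m := by omega
    simp [h, this]

lemma cas_main {k : ℕ} (hk : 0 < k) (f : Fin k → ℝ → ℝ) (g : ℝ → ℝ) (A C : ℝ → ℝ) (lm : ℝ)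
    (x : ℝ) (h0 : omD f x ≠ 0) (h1 : omD f (x+1) ≠ 0)
    (hf : ∀ i, ∃ (c d : ℝ) (i' : Fin k), ∀ y,
      A y * f i (y-1) + (-A y - C y) * f i y + C y * f i (y+1) = c * f i y + d * f i' y)
    (hg : ∀ y, A y * g (y-1) + (-A y - C y) * g y + C y * g (y+1) = lm * g y) :
    (A x * omD f (x+1) / omD f x) * casD f g (x-1)
     + (-A (x+k) - C (x+k) + (C (x+k) * laD f (x+1) / omD f (x+1)
         - C (x+k-1) * laD f x / omD f x)) * casD f g x
     + (C (x+k) * omD f x / omD f (x+1)) * casD f g (x+1) = lm * casD f g x := by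
  obtain ⟨m, rfl⟩ : ∃ m, k = m+1 := ⟨k-1, by omega⟩
  set hm := A x * omD f (x+1) / omD f x with hhm
  set hz := (-A (x+(m+1:ℕ)) - C (x+(m+1:ℕ)) + (C (x+(m+1:ℕ)) * laD f (x+1) / omD f (x+1)
         - C (x+(m+1:ℕ)-1) * laD f x / omD f x)) with hhz
  set hp := (C (x+(m+1:ℕ)) * omD f x / omD f (x+1)) with hhp
  obtain ⟨e, he⟩ := aux_sums m hm hz hp (casC f (x-1)) (casC f x) (casC f (x+1))
    (fun j => A (x+j)) (fun j => -A (x+j) - C (x+j)) (fun j => C (x+j))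
    (by
      rw [casC_zero, casC_zero, sub_add_cancel, hhm]
      simp only [Nat.cast_zero, add_zero]
      field_simp)
    (by
      rw [casC_last, casC_last, hhp]
      field_simp)
    (by
      rw [casC_last, casC_pred, casC_pred, hhp, hhz]
      have : x + ((m+1 : ℕ):ℝ) - 1 = x + (m:ℝ) := by push_cast; ring
      rw [this, pow_succ]
      field_simp
      ring)
  -- operator form
  have key : ∀ u : ℝ → ℝ, hm * casD f u (x-1) + hz * casD f u x + hp * casD f u (x+1)
      - casD f (fun y => A y * u (y-1) + (-A y - C y) * u y + C y * u (y+1)) x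
      = ∑ j ∈ range (m+1), e j * u (x + (j:ℝ)) := by
    intro u
    have := he (fun j => u (x - 1 + (j:ℝ)))
    simp only [casD_eq]
    convert this using 1
    · congr 1
      · congr 1
        · congr 2
          refine Finset.sum_congr rfl fun j _ => ?_
          congr 2; push_cast; ring
        · congr 1
          refine Finset.sum_congr rfl fun j _ => ?_
          congr 2; push_cast; ring
      · refine Finset.sum_congr rfl fun j _ => ?_
        have a1 : x + (j:ℝ) - 1 = x - 1 + (j:ℝ) := by ring
        have a2 : x + (j:ℝ) = x - 1 + ((j+1:ℕ):ℝ) := by push_cast; ring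
        have a3 : x + (j:ℝ) + 1 = x - 1 + ((j+2:ℕ):ℝ) := by push_cast; ring
        rw [← a1, ← a2, ← a3]
    · refine Finset.sum_congr rfl fun j _ => ?_
      congr 2; push_cast; ring
  have hlin : ∀ (a b : ℝ) (u v : ℝ → ℝ), casD f (fun y => a * u y + b * v y) x
      = a * casD f u x + b * casD f v x := by
    intro a b u v
    simp only [casD_eq, Finset.mul_sum, ← Finset.sum_add_distrib]
    exact Finset.sum_congr rfl fun j _ => by ring
  have hz0 : (fun j : Fin (m+1) => e j) = 0 := by
    refine Matrix.eq_zero_of_mulVec_eq_zero (M := Matrix.of fun i j : Fin (m+1) =>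
      f i (x + ((j : ℕ) : ℝ))) h0 ?_
    ext i
    obtain ⟨c, d, i', hi⟩ := hf i
    have := key (f i)
    rw [funext hi, hlin, casD_self, casD_self, casD_self, casD_self] at this
    simp only [mul_zero, add_zero, sub_zero] at this
    rw [← Fin.sum_univ_eq_sum_range (fun j => e j * f i (x + (j:ℝ)))] at this
    simp only [Matrix.mulVec, dotProduct, Matrix.of_apply, Pi.zero_apply]
    rw [this]
    exact Finset.sum_congr rfl fun j _ => mul_comm _ _
  have hk2 := key g
  have hg2 : (fun y => A y * g (y-1) + (-A y - C y) * g y + C y * g (y+1))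
      = fun y => lm * g y + 0 * g y := by
    funext y; rw [hg]; ring
  rw [hg2, hlin, ← Fin.sum_univ_eq_sum_range (fun j => e j * g (x + (j:ℝ)))] at hk2
  have : ∑ j : Fin (m+1), e j * g (x + ((j:ℕ):ℝ)) = 0 :=
    Finset.sum_eq_zero fun j _ => by
      have := congrFun hz0 j
      simp only [Pi.zero_apply] at this
      rw [this, zero_mul]
  rw [this] at hk2
  linarith

lemma poch_succ (z : ℝ) (m : ℕ) : poch z (m+1) = poch z m * (z + m) := by
  unfold poch; rw [Finset.prod_range_succ]

lemma poch_zero' (z : ℝ) : poch z 0 = 1 := by simp [poch]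

lemma poch_succ_left (z : ℝ) (m : ℕ) : poch z (m+1) = z * poch (z+1) m := by
  unfold poch; rw [Finset.prod_range_succ', mul_comm]
  congr 1
  · simp
  · exact Finset.prod_congr rfl fun i _ => by push_cast; ring

lemma poch_add (z : ℝ) (m l : ℕ) : poch z (m+l) = poch z m * poch (z+m) l := by
  unfold poch; rw [Finset.prod_range_add]
  congr 1
  exact Finset.prod_congr rfl fun i _ => by push_cast; ring

lemma poch_ne_zero {z : ℝ} {m : ℕ} (h : ∀ i < m, z + (i:ℝ) ≠ 0) : poch z m ≠ 0 :=
  Finset.prod_ne_zero_iff.2 fun i hi => h i (Finset.mem_range.1 hi)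

lemma poch_ne_of_le {z : ℝ} {j m : ℕ} (hjm : j ≤ m) (h : poch z m ≠ 0) : poch z j ≠ 0 := by
  obtain ⟨l, rfl⟩ := Nat.exists_eq_add_of_le hjm
  rw [poch_add] at h
  exact left_ne_zero_of_mul h

lemma poch_neg_nat {m j : ℕ} (h : m < j) : poch (-(m:ℝ)) j = 0 :=
  Finset.prod_eq_zero (Finset.mem_range.2 h) (by ring)

/-- action of the Hahn difference operator on `(-x)_j`. -/
lemma hahnOp_poch (a b N x : ℝ) (j : ℕ) :
    x * (x-b-N-1) * poch (-(x-1)) (j+1)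
      + (-(x*(x-b-N-1)) - (x+a+1)*(x-N)) * poch (-x) (j+1)
      + (x+a+1)*(x-N) * poch (-(x+1)) (j+1)
    = ((j:ℝ)+1)*(j+1+a+b+1) * poch (-x) (j+1) - ((j:ℝ)+1)*(j+1+a)*(j-N) * poch (-x) j := by
  have h1 : x * poch (-(x-1)) (j+1) = (x - (j+1)) * poch (-x) (j+1) := by
    have e1 := poch_succ (-x) (j+1)
    have e2 := poch_succ_left (-x) (j+1)
    rw [show -x+1 = -(x-1) by ring] at e2
    push_cast at e1
    linear_combination e2 - e1
  have h2 : poch (-(x+1)) (j+1) = -(x+1) * poch (-x) j := by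
    rw [poch_succ_left]; congr 2; ring
  rw [h2]
  have h3 := poch_succ (-x) j
  rw [h3] at h1 ⊢
  linear_combination (x-b-N-1) * h1

lemma hahn_eig_gen (a b N mu : ℝ) (n : ℕ) (κ : ℕ → ℝ)
    (hκ : ∀ j < n, κ j * ((j:ℝ)*(j+a+b+1) - mu) = κ (j+1) * ((j:ℝ)+1)*(j+1+a)*(j-N))
    (hmu : mu = (n:ℝ)*(n+a+b+1)) (x : ℝ) :
    x * (x-b-N-1) * (∑ j ∈ range (n+1), κ j * poch (-(x-1)) j)
      + (-(x*(x-b-N-1)) - (x+a+1)*(x-N)) * (∑ j ∈ range (n+1), κ j * poch (-x) j)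
      + (x+a+1)*(x-N) * (∑ j ∈ range (n+1), κ j * poch (-(x+1)) j)
    = mu * ∑ j ∈ range (n+1), κ j * poch (-x) j := by
  have step : ∀ k ≤ n, x * (x-b-N-1) * (∑ j ∈ range (k+1), κ j * poch (-(x-1)) j)
      + (-(x*(x-b-N-1)) - (x+a+1)*(x-N)) * (∑ j ∈ range (k+1), κ j * poch (-x) j)
      + (x+a+1)*(x-N) * (∑ j ∈ range (k+1), κ j * poch (-(x+1)) j)
    = mu * (∑ j ∈ range (k+1), κ j * poch (-x) j)
      + κ k * ((k:ℝ)*(k+a+b+1) - mu) * poch (-x) k := by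
    intro k
    induction k with
    | zero => intro _; simp [poch_zero']; ring
    | succ k ih =>
      intro hk
      have h1 := ih (by omega)
      have h2 := hahnOp_poch a b N x k
      have h3 := hκ k (by omega)
      rw [Finset.sum_range_succ _ (k+1), Finset.sum_range_succ _ (k+1),
        Finset.sum_range_succ _ (k+1)]
      push_cast
      linear_combination h1 + κ (k+1) * h2 + poch (-x) k * h3
  have := step n le_rfl
  rw [← hmu] at this
  rw [this]; ring

noncomputable def hahnC (a b N : ℝ) (n j : ℕ) : ℝ :=
  poch (-(n : ℝ)) j * poch (a + b + (n : ℝ) + 1) j * poch (-N + (j : ℝ)) (n - j) *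
      poch (a + (j : ℝ) + 1) (n - j) / (j.factorial : ℝ)

lemma hahn_eqC (a b N : ℝ) (n : ℕ) (x : ℝ) :
    hahn a b N n x = ∑ j ∈ range (n+1), hahnC a b N n j * poch (-x) j := by
  unfold hahn hahnC
  exact Finset.sum_congr rfl fun j _ => by ring

lemma hahn_eig (a b N : ℝ) (n : ℕ) (x : ℝ) :
    x * (x-b-N-1) * hahn a b N n (x-1)
      + (-(x*(x-b-N-1)) - (x+a+1)*(x-N)) * hahn a b N n x
      + (x+a+1)*(x-N) * hahn a b N n (x+1) = lam a b n * hahn a b N n x := by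
  simp only [hahn_eqC]
  refine hahn_eig_gen a b N _ n _ ?_ (by unfold lam; ring) x
  intro j hj
  unfold hahnC lam
  obtain ⟨l, rfl⟩ : ∃ l, n = j + 1 + l := Nat.exists_eq_add_of_lt hj |>.imp fun l h => by omega
  have e1 : j + 1 + l - j = l + 1 := by omega
  have e2 : j + 1 + l - (j + 1) = l := by omega
  rw [e1, e2, poch_succ_left, poch_succ_left, poch_succ _ j, poch_succ _ j, Nat.factorial_succ]
  have hf : (j.factorial : ℝ) ≠ 0 := by positivity
  have hj1 : (j:ℝ) + 1 ≠ 0 := by positivity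
  have e3 : -N + (j:ℝ) + 1 = -N + ((j+1:ℕ):ℝ) := by push_cast; ring
  have e4 : a + (j:ℝ) + 1 + 1 = a + ((j+1:ℕ):ℝ) + 1 := by push_cast; ring
  rw [e3, e4]
  generalize poch (-N + ((j+1:ℕ):ℝ)) l = X
  generalize poch (a + ((j+1:ℕ):ℝ) + 1) l = Y
  generalize poch (-((j+1+l:ℕ):ℝ)) j = Z
  generalize poch (a + b + ((j+1+l:ℕ):ℝ) + 1) j = W
  push_cast
  field_simp
  ring

/-- coefficients of `phiH`. -/
noncomputable def phiC (α β : ℤ) (N : ℝ) (u : ℕ) (s : ℝ) (j : ℕ) : ℝ :=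
  poch ((α : ℝ) + 1) (max u (-α - β - (u : ℤ) - 1).toNat) *
    poch (-N) (max u (-α - β - (u : ℤ) - 1).toNat) *
      (poch (-(u : ℝ)) j * poch ((u : ℝ) - s + (α : ℝ) + (β : ℝ) + 1) j /
        (poch ((α : ℝ) - s + 1) j * poch (-N) j * (j.factorial : ℝ)))

lemma phiH_eqC (α β : ℤ) (N : ℝ) (u : ℕ) (s x : ℝ) :
    phiH α β N u s x = ∑ j ∈ range (u+1), phiC α β N u s j * poch (-x) j := by
  unfold phiH phiC
  rw [Finset.mul_sum]
  exact Finset.sum_congr rfl fun j _ => by ring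

lemma phiH_eig (α β : ℤ) (N : ℝ) (u : ℕ) (s x : ℝ) (hN : poch (-N) u ≠ 0)
    (hs : poch ((α:ℝ) - s + 1) u ≠ 0) :
    x * (x-β-N-1) * phiH α β N u s (x-1)
      + (-(x*(x-β-N-1)) - (x+(α-s)+1)*(x-N)) * phiH α β N u s x
      + (x+(α-s)+1)*(x-N) * phiH α β N u s (x+1)
      = (u:ℝ)*(u+(α-s)+β+1) * phiH α β N u s x := by
  simp only [phiH_eqC]
  refine hahn_eig_gen (α-s) β N _ u _ ?_ rfl x
  intro j hj
  have n1 := poch_ne_of_le (show j + 1 ≤ u by omega) hN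
  have n2 := poch_ne_of_le (show j + 1 ≤ u by omega) hs
  unfold phiC
  rw [poch_succ] at n1 n2
  simp only [poch_succ _ j, Nat.factorial_succ]
  generalize poch ((α : ℝ) + 1) (max u (-α - β - (u : ℤ) - 1).toNat) *
    poch (-N) (max u (-α - β - (u : ℤ) - 1).toNat) = K
  generalize poch (-(u:ℝ)) j = Z
  generalize poch ((u : ℝ) - s + (α : ℝ) + (β : ℝ) + 1) j = W
  generalize poch (-N) j = X at *
  generalize poch ((α : ℝ) - s + 1) j = Y at *
  have hX := left_ne_zero_of_mul n1
  have hX2 := right_ne_zero_of_mul n1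
  have hY := left_ne_zero_of_mul n2
  have hY2 := right_ne_zero_of_mul n2
  have hf : (j.factorial : ℝ) ≠ 0 := by positivity
  have hj1 : (j:ℝ) + 1 ≠ 0 := by positivity
  push_cast
  field_simp
  ring

lemma poch_differentiable (j : ℕ) : Differentiable ℝ (fun z => poch z j) := by
  unfold poch
  fun_prop

lemma phiH_diff (α β : ℤ) (N : ℝ) (u : ℕ) (x : ℝ) (hN : poch (-N) u ≠ 0)
    (hs : poch ((α:ℝ) + 1) u ≠ 0) :
    DifferentiableAt ℝ (fun s => phiH α β N u s x) 0 := by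
  simp only [phiH_eqC]
  refine DifferentiableAt.fun_sum fun j hj => ?_
  have hju : j ≤ u := by have := Finset.mem_range.1 hj; omega
  have n1 := poch_ne_of_le hju hN
  have n2 := poch_ne_of_le hju hs
  have hf : (j.factorial : ℝ) ≠ 0 := by positivity
  unfold phiC
  have d1 : DifferentiableAt ℝ (fun s : ℝ => poch ((u : ℝ) - s + (α : ℝ) + (β : ℝ) + 1) j) 0 :=
    ((poch_differentiable j).comp (g := fun z => poch z j)
      (f := fun s : ℝ => (u : ℝ) - s + (α : ℝ) + (β : ℝ) + 1) (by fun_prop)).differentiableAt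
  have d2 : DifferentiableAt ℝ (fun s : ℝ => poch ((α : ℝ) - s + 1) j) 0 :=
    ((poch_differentiable j).comp (g := fun z => poch z j)
      (f := fun s : ℝ => (α : ℝ) - s + 1) (by fun_prop)).differentiableAt
  refine DifferentiableAt.mul_const (DifferentiableAt.const_mul ?_ _) _
  refine DifferentiableAt.div (d1.const_mul _) ((d2.mul_const _).mul_const _) ?_
  simp only [sub_zero]
  exact mul_ne_zero (mul_ne_zero n2 n1) hf

lemma phiH_deriv_eig (α β : ℤ) (N : ℝ) (u : ℕ) (x : ℝ) (hN : poch (-N) u ≠ 0)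
    (hs : poch ((α:ℝ) + 1) u ≠ 0) :
    x * (x-β-N-1) * deriv (fun s => phiH α β N u s (x-1)) 0
      + (-(x*(x-β-N-1)) - (x+α+1)*(x-N)) * deriv (fun s => phiH α β N u s x) 0
      + (x+α+1)*(x-N) * deriv (fun s => phiH α β N u s (x+1)) 0
      = (u:ℝ)*(u+α+β+1) * deriv (fun s => phiH α β N u s x) 0
       + (x-N) * (phiH α β N u 0 (x+1) - phiH α β N u 0 x) - u * phiH α β N u 0 x := by
  have c2 : ContinuousAt (fun s : ℝ => poch ((α : ℝ) - s + 1) u) 0 :=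
    ((poch_differentiable u).comp (g := fun z => poch z u)
      (f := fun s : ℝ => (α : ℝ) - s + 1) (by fun_prop)).continuous.continuousAt
  have hev : ∀ᶠ s in nhds (0:ℝ), poch ((α:ℝ) - s + 1) u ≠ 0 :=
    c2.eventually_ne (by simpa using hs)
  have D : ∀ y, HasDerivAt (fun s => phiH α β N u s y) (deriv (fun s => phiH α β N u s y) 0) 0 :=
    fun y => (phiH_diff α β N u y hN hs).hasDerivAt
  have i1 : HasDerivAt (fun s : ℝ => x + (α-s)+1) (-1) 0 := by
    simpa using ((((hasDerivAt_id (0:ℝ)).const_sub (α:ℝ)).const_add x).add_const 1)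
  have i2 : HasDerivAt (fun s : ℝ => (u:ℝ)*(u+(α-s)+β+1)) ((u:ℝ) * (-1)) 0 := by
    have := ((((hasDerivAt_id (0:ℝ)).const_sub (α:ℝ)).const_add (u:ℝ)).add_const (β:ℝ)).add_const 1
    exact this.const_mul (u:ℝ)
  have L := (((D (x-1)).const_mul (x * (x-β-N-1))).add
    ((((i1.mul_const (x-N)).const_sub (-(x*(x-β-N-1)))).mul (D x)))).add
    ((i1.mul_const (x-N)).mul (D (x+1)))
  have R := i2.mul (D x)
  have R' := R.congr_of_eventuallyEq (hev.mono fun s hs' => phiH_eig α β N u s x hN hs')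
  have := L.unique R'
  simp only [sub_zero] at this
  linear_combination this

lemma ceil_cond (α β : ℤ) (n : ℕ) :
    ⌈((-α - β : ℤ) : ℚ) / 2⌉ ≤ (n : ℤ) ↔ -α - β ≤ 2 * (n:ℤ) := by
  rw [Int.ceil_le, div_le_iff₀ (by norm_num)]
  constructor
  · intro h
    have : ((-α - β : ℤ) : ℚ) ≤ ((2 * (n:ℤ) : ℤ) : ℚ) := by push_cast at h ⊢; linarith
    exact_mod_cast this
  · intro h
    have : ((-α - β : ℤ) : ℚ) ≤ ((2 * (n:ℤ) : ℤ) : ℚ) := by exact_mod_cast h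
    push_cast at this ⊢; linarith

lemma hahn_shift_eig (a b N : ℝ) (l k : ℕ) (ha : a = -(l:ℝ)) (x : ℝ) :
    x * (x-b-N-1) * (poch (-(x-1)) l * hahn (-a) b (a+N) k (x-1+a))
      + (-(x*(x-b-N-1)) - (x+a+1)*(x-N)) * (poch (-x) l * hahn (-a) b (a+N) k (x+a))
      + (x+a+1)*(x-N) * (poch (-(x+1)) l * hahn (-a) b (a+N) k (x+1+a))
      = lam a b (k - a) * (poch (-x) l * hahn (-a) b (a+N) k (x+a)) := by
  have h := hahn_eig (-a) b (a+N) k (x+a)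
  have h1 : x * poch (-(x-1)) l = (x + a) * poch (-x) l := by
    have e1 := poch_succ (-x) l
    have e2 := poch_succ_left (-x) l
    rw [show -x+1 = -(x-1) by ring] at e2
    rw [ha]
    linear_combination e2 - e1
  have h2 : (x+a+1) * poch (-(x+1)) l = (x+1) * poch (-x) l := by
    have e1 := poch_succ (-(x+1)) l
    have e2 := poch_succ_left (-(x+1)) l
    rw [show -(x+1)+1 = -x by ring] at e2
    rw [ha]
    linear_combination e1 - e2
  rw [show x + a - 1 = x - 1 + a by ring, show x + a + 1 = x + 1 + a by ring] at h
  unfold lam at *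
  linear_combination (x-b-N-1) * hahn (-a) b (a+N) k (x-1+a) * h1
    + (x-N) * hahn (-a) b (a+N) k (x+1+a) * h2 + poch (-x) l * h

lemma phiH_zero_symm (α β : ℤ) (N : ℝ) (n m : ℕ) (hm : (m:ℤ) = -α - β - n - 1) (hmn : m ≤ n)
    (x : ℝ) : phiH α β N n 0 x = phiH α β N m 0 x := by
  simp only [phiH_eqC]
  have e1 : (-α - β - (n:ℤ) - 1).toNat = m := by omega
  have e2 : (-α - β - (m:ℤ) - 1).toNat = n := by omega
  have hr : (m:ℝ) = -α - β - n - 1 := by exact_mod_cast hm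
  have hc : ∀ j, phiC α β N n 0 j = phiC α β N m 0 j := by
    intro j
    unfold phiC
    rw [e1, e2, max_comm m n]
    have r1 : (n:ℝ) - 0 + α + β + 1 = -(m:ℝ) := by rw [hr]; ring
    have r2 : (m:ℝ) - 0 + α + β + 1 = -(n:ℝ) := by rw [hr]; ring
    rw [r1, r2]; ring
  simp only [hc]
  refine (Finset.sum_subset (fun j hj => ?_) fun j _ hj => ?_).symm
  · simp only [Finset.mem_range] at *; omega
  · have : m < j := by simp only [Finset.mem_range] at hj; omega
    unfold phiC
    rw [poch_neg_nat this]; simp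

lemma phiH_zero_hahn (α β : ℤ) (N : ℝ) (m : ℕ) (hN : poch (-N) m ≠ 0)
    (hs : poch ((α:ℝ) + 1) m ≠ 0) : ∃ c, ∀ x, phiH α β N m 0 x = c * hahn α β N m x := by
  refine ⟨poch ((α : ℝ) + 1) (max m (-α - β - (m : ℤ) - 1).toNat) *
    poch (-N) (max m (-α - β - (m : ℤ) - 1).toNat) / (poch ((α:ℝ)+1) m * poch (-N) m), fun x => ?_⟩
  rw [phiH_eqC, hahn_eqC, Finset.mul_sum]
  refine Finset.sum_congr rfl fun j hj => ?_
  have hjm : j ≤ m := by have := Finset.mem_range.1 hj; omega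
  have n1 := poch_ne_of_le hjm hN
  have n2 := poch_ne_of_le hjm hs
  obtain ⟨l, rfl⟩ := Nat.exists_eq_add_of_le hjm
  unfold phiC hahnC
  generalize poch ((α : ℝ) + 1) (max (j+l) (-α - β - ((j+l:ℕ) : ℤ) - 1).toNat) *
    poch (-N) (max (j+l) (-α - β - ((j+l:ℕ) : ℤ) - 1).toNat) = K
  rw [poch_add] at hN hs
  rw [poch_add, poch_add, Nat.add_sub_cancel_left]
  rw [show (α:ℝ) - 0 + 1 = α + 1 by ring,
    show ((j+l:ℕ):ℝ) - 0 + α + β + 1 = α + β + ((j+l:ℕ):ℝ) + 1 by ring,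
    show (α:ℝ) + j + 1 = α + 1 + j by ring]
  have m1 := right_ne_zero_of_mul hN
  have m2 := right_ne_zero_of_mul hs
  have hf : (j.factorial : ℝ) ≠ 0 := by positivity
  field_simp

lemma Hhat_op (α β : ℤ) (N : ℝ) (M : ℕ → ℝ) (hαβ : α ≤ β) (hβ : β ≤ -1) (n : ℕ) :
    ∃ (d : ℝ) (m : ℕ), ((-β ≤ (m:ℤ) ∧ (m:ℤ) ≤ -α-β-1) ∧ (-β ≤ (n:ℤ) ∧ (n:ℤ) ≤ -α-β-1)
        ∨ d = 0 ∧ m = n) ∧ ∀ x : ℝ,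
      x * (x-β-N-1) * Hhat α β N M n (x-1)
        + (-(x*(x-β-N-1)) - (x+α+1)*(x-N)) * Hhat α β N M n x
        + (x+α+1)*(x-N) * Hhat α β N M n (x+1)
        = lam α β n * Hhat α β N M n x + d * Hhat α β N M m x := by
  by_cases c1 : -α - β ≤ 2 * (n:ℤ) ∧ (n : ℤ) ≤ -α - 1
  · obtain ⟨m, hm⟩ : ∃ m : ℕ, (m:ℤ) = -α - β - n - 1 :=
      ⟨(-α - β - n - 1).toNat, by omega⟩
    have hmn : m < n := by omega
    have hH : ∀ y, Hhat α β N M n y = deriv (fun s => phiH α β N n s y) 0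
        - deriv (fun s => phiH α β N m s y) 0 := by
      intro y
      unfold Hhat
      rw [if_pos (by rw [ceil_cond]; exact c1)]
      congr 4
      have : (-α - β - (n:ℤ) - 1).toNat = m := by omega
      rw [this]
    have hHm : ∀ y, Hhat α β N M m y = hahn α β N m y := by
      intro y
      unfold Hhat
      rw [if_neg (by rw [ceil_cond]; omega), if_neg (by omega)]
    have e1 : max n (-α - β - (n:ℤ) - 1).toNat = n := by omega
    have e2 : max m (-α - β - (m:ℤ) - 1).toNat = n := by omega
    have hs : poch ((α:ℝ) + 1) n ≠ 0 := by
      refine poch_ne_zero fun i hi => ?_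
      have : α + 1 + (i:ℤ) ≠ 0 := by omega
      exact_mod_cast this
    by_cases hN : poch (-N) n = 0
    · refine ⟨0, n, Or.inr ⟨rfl, rfl⟩, fun x => ?_⟩
      have z : ∀ y, Hhat α β N M n y = 0 := by
        intro y
        rw [hH]
        unfold phiH
        rw [e1, e2, hN]
        simp
      simp [z]
    · have hNm := poch_ne_of_le hmn.le hN
      have hsm := poch_ne_of_le hmn.le hs
      obtain ⟨c, hc⟩ := phiH_zero_hahn α β N m hNm hsm
      refine ⟨((m:ℝ) - n) * c, m, Or.inl ⟨by omega, by omega⟩, fun x => ?_⟩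
      have k1 := phiH_deriv_eig α β N n x hN hs
      have k2 := phiH_deriv_eig α β N m x hNm hsm
      rw [phiH_zero_symm α β N n m hm hmn.le, phiH_zero_symm α β N n m hm hmn.le] at k1
      simp only [hHm, hH]
      have hr : (m:ℝ) = -α - β - n - 1 := by exact_mod_cast hm
      have hl : (m:ℝ) * (m+α+β+1) = (n:ℝ) * (n+α+β+1) := by rw [hr]; ring
      rw [hl] at k2
      have h0 := hc x
      unfold lam
      linear_combination k1 - k2 + (m - n : ℝ) * h0
  · refine ⟨0, n, Or.inr ⟨rfl, rfl⟩, fun x => ?_⟩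
    by_cases c2 : -α ≤ (n : ℤ) ∧ (n : ℤ) ≤ -α - β - 1
    · obtain ⟨m, hm⟩ : ∃ m : ℕ, (m:ℤ) = -α - β - n - 1 :=
        ⟨(-α - β - n - 1).toNat, by omega⟩
      obtain ⟨k, hk⟩ : ∃ k : ℕ, (k:ℤ) = α + n := ⟨(α + n).toNat, by omega⟩
      obtain ⟨l, hl⟩ : ∃ l : ℕ, (l:ℤ) = -α := ⟨(-α).toNat, by omega⟩
      have t1 : (-α - β - (n:ℤ) - 1).toNat = m := by omega
      have t2 : (α + (n:ℤ)).toNat = k := by omega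
      have t3 : (-α).toNat = l := by omega
      obtain ⟨P, Q, hPQ⟩ : ∃ P Q : ℝ, ∀ y, Hhat α β N M n y
          = P * (poch (-y) l * hahn (-(α:ℝ)) β (α+N) k (y+α)) + Q * hahn α β N m y := by
        refine ⟨(-1 : ℝ) ^ ((β : ℤ) + (n : ℤ)) * ((β + (n : ℤ)).toNat.factorial : ℝ) *
            (m.factorial : ℝ),
          (-1 : ℝ) ^ ((β : ℤ) + (n : ℤ)) * ((β + (n : ℤ)).toNat.factorial : ℝ) *
            ((k.factorial : ℝ) *
            poch (-N - (α : ℝ) - (β : ℝ) - (n : ℝ) - 1) (2 * (n : ℤ) + α + β + 1).toNat /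
            (M k - 1)), fun y => ?_⟩
        unfold Hhat
        rw [if_neg (by rw [ceil_cond]; exact c1), if_pos c2, t1, t2, t3]
        ring
      simp only [hPQ]
      have k1 := hahn_shift_eig α β N l k (by
        have : (α:ℤ) = -(l:ℤ) := by omega
        exact_mod_cast this) x
      have k2 := hahn_eig α β N m x
      have hr : (m:ℝ) = -α - β - n - 1 := by exact_mod_cast hm
      have hkr : (k:ℝ) = α + n := by exact_mod_cast hk
      have l1 : lam α β ((k:ℝ) - α) = lam α β n := by rw [hkr]; congr 1; ring
      have l2 : lam α β (m:ℝ) = lam α β n := by unfold lam; rw [hr]; ring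
      rw [l1] at k1
      rw [l2] at k2
      linear_combination P * k1 + Q * k2
    · have hH : ∀ y, Hhat α β N M n y = hahn α β N n y := by
        intro y
        unfold Hhat
        rw [if_neg (by rw [ceil_cond]; exact c1), if_neg c2]
      simp only [hH]
      rw [hahn_eig]; ring

/-- second order difference equation for the exceptional Hahn polynomials. -/
theorem exceptional_hahn_difference_equation
    (α β : ℤ) (N : ℝ) (M : ℕ → ℝ) (F : Finset ℕ)
    (hαβ : α ≤ β) (hβ : β ≤ -1)
    (hN : ∀ k : ℕ, N ≠ -(k : ℝ))
    (hM : ∀ i, M i ≠ 0 ∧ M i ≠ 1)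
    (hFpos : ∀ f ∈ F, 0 < f)
    (hFc : ∀ k : ℕ, -β ≤ (k : ℤ) → (k : ℤ) ≤ -α - β - 1 → k ∈ F)
    (n : ℕ) (hn : inSigma F n) (x : ℝ)
    (hx : OmegaH α β N M F x * OmegaH α β N M F (x + 1) ≠ 0) :
    (x * (x - (β : ℝ) - N - 1) * OmegaH α β N M F (x + 1) / OmegaH α β N M F x) *
        exHahn α β N M F n (x - 1) +
      (-((x + (F.card : ℝ)) * (x - (β : ℝ) - N - 1 + (F.card : ℝ))) -
          (x + (α : ℝ) + 1 + (F.card : ℝ)) * (x - N + (F.card : ℝ)) +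
          ((x + 1 + (α : ℝ) + (F.card : ℝ)) * (x - N + (F.card : ℝ)) *
              LambdaH α β N M F (x + 1) / OmegaH α β N M F (x + 1) -
            (x + (α : ℝ) + (F.card : ℝ)) * (x - N - 1 + (F.card : ℝ)) *
              LambdaH α β N M F x / OmegaH α β N M F x)) *
        exHahn α β N M F n x +
      ((x + (α : ℝ) + (F.card : ℝ) + 1) * (x - N + (F.card : ℝ)) *
          OmegaH α β N M F x / OmegaH α β N M F (x + 1)) *
        exHahn α β N M F n (x + 1) =
    lam (α : ℝ) (β : ℝ) ((n - uF F : ℕ) : ℝ) * exHahn α β N M F n x := by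
  have hk : 0 < F.card :=
    Finset.card_pos.2 ⟨(-β).toNat, hFc _ (by omega) (by omega)⟩
  obtain ⟨h0, h1⟩ := mul_ne_zero_iff.1 hx
  have hmain := cas_main hk (fun i => Hhat α β N M (elemOf F i)) (Hhat α β N M (n - uF F))
    (fun y => y * (y - β - N - 1)) (fun y => (y + α + 1) * (y - N))
    (lam (α : ℝ) (β : ℝ) ((n - uF F : ℕ) : ℝ)) x h0 h1
    (by
      intro i
      obtain ⟨d, m, hm, h⟩ := Hhat_op α β N M hαβ hβ (elemOf F i)
      have hmF : m ∈ F := by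
        rcases hm with ⟨⟨a, b⟩, _⟩ | ⟨_, rfl⟩
        · exact hFc m a b
        · exact (F.orderIsoOfFin rfl i).2
      refine ⟨lam α β (elemOf F i), d, (F.orderIsoOfFin rfl).symm ⟨m, hmF⟩, fun y => (h y).trans ?_⟩
      have : elemOf F ((F.orderIsoOfFin rfl).symm ⟨m, hmF⟩) = m := by
        unfold elemOf
        rw [OrderIso.apply_symm_apply]
      rw [this])
    (by
      intro y
      obtain ⟨d, m, hm, h⟩ := Hhat_op α β N M hαβ hβ (n - uF F)
      rcases hm with ⟨_, a, b⟩ | ⟨rfl, rfl⟩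
      · exact absurd (hFc _ a b) hn.2
      · rw [h y]; ring)
  have eO : ∀ y, OmegaH α β N M F y = omD (fun i => Hhat α β N M (elemOf F i)) y := fun _ => rfl
  have eL : ∀ y, LambdaH α β N M F y = laD (fun i => Hhat α β N M (elemOf F i)) y := fun _ => rfl
  have eE : ∀ y, exHahn α β N M F n y = casD (fun i => Hhat α β N M (elemOf F i))
    (Hhat α β N M (n - uF F)) y := fun _ => rfl
  simp only [eO, eL, eE]
  rw [← hmain]
  ring
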